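/- Let R be a ring and X a chain complex of left R-modules with a filtration (F^p)_{p∈ℤ}, and let ι^p : F^p → X denote the inclusion morphisms. Fix p, q ∈ ℤ and set n = p + q. If there exists r₀ ≥ 1 such that H_n(ι^{p+r₀−1}) : H_n(F^{p+r₀−1}) → H_n(X) is an isomorphism, then (⋃_{r≥0} J^r_{p,q}) + F^{p−1}_n = (Im ∂_{n+1} ∩ F^p_n) + F^{p−1}_n as submodules of X_n. -/

import Mathlib

open Submodule

variable {R : Type*} [Ring R]

section FiltrationSetup

variable (X : ℤ → Type*) [∀ n, AddCommGroup (X n)] [∀ n, Module R (X n)]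

/-- The submodule `I^r_{p,q}` of `X_n` (where `n = p + q`):
`I^r_{p,q} = (∂_n)⁻¹(F^{p−r}_{n−1}) ∩ F^p_n`. -/
def filtI (d : ∀ i j : ℤ, X i →ₗ[R] X j) (F : ℤ → ∀ n : ℤ, Submodule R (X n))
    (r p n : ℤ) : Submodule R (X n) :=
  Submodule.comap (d n (n - 1)) (F (p - r) (n - 1)) ⊓ F p n

/-- The submodule `J^r_{p,q}` of `X_n` (where `n = p + q`):
`J^r_{p,q} = ∂_{n+1}(F^{p+r−1}_{n+1}) ∩ F^p_n`. -/
def filtJ (d : ∀ i j : ℤ, X i →ₗ[R] X j) (F : ℤ → ∀ n : ℤ, Submodule R (X n))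
    (r p n : ℤ) : Submodule R (X n) :=
  Submodule.map (d (n + 1) n) (F (p + r - 1) (n + 1)) ⊓ F p n

/-- The `m`-th homology of a ℤ-indexed complex `(Y, e)` (with the homological-complex
convention `e i j : Y i →ₗ Y j`, nonzero only for `j = i − 1`):
`H_m = Ker(e m (m−1)) / Im(e (m+1) m)`. -/
abbrev homologyAt (Y : ℤ → Type*) [∀ n, AddCommGroup (Y n)] [∀ n, Module R (Y n)]
    (e : ∀ i j : ℤ, Y i →ₗ[R] Y j) (m : ℤ) :=
  ↥(LinearMap.ker (e m (m - 1))) ⧸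
    Submodule.comap (LinearMap.ker (e m (m - 1))).subtype (LinearMap.range (e (m + 1) m))

variable (d : ∀ i j : ℤ, X i →ₗ[R] X j) (F : ℤ → ∀ n : ℤ, Submodule R (X n))
variable (hsub : ∀ p i j : ℤ, ∀ x : X i, x ∈ F p i → d i j x ∈ F p j)

/-- The differentials of the subcomplex `F^p`, given by restricting those of `X`. -/
def subD (p i j : ℤ) : ↥(F p i) →ₗ[R] ↥(F p j) :=
  (d i j).restrict (fun x hx => hsub p i j x hx)

/-- The inclusion `Ker(∂_n^{F^p}) → Ker(∂_n^X)`. -/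
def inclKer (p n : ℤ) :
    ↥(LinearMap.ker (subD X d F hsub p n (n - 1))) →ₗ[R] ↥(LinearMap.ker (d n (n - 1))) :=
  LinearMap.codRestrict _
    ((F p n).subtype.comp (LinearMap.ker (subD X d F hsub p n (n - 1))).subtype)
    (fun x => by
      have hx : subD X d F hsub p n (n - 1) x.1 = 0 := x.2
      have h' : d n (n - 1) (x.1 : X n) = 0 := congrArg Subtype.val hx
      simpa [LinearMap.mem_ker] using h')

/-- The map `H_n(ι^p) : H_n(F^p) → H_n(X)` induced on homology by the inclusion
`ι^p : F^p → X`. -/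
def homologyMapIncl (p n : ℤ) :
    homologyAt (fun m => ↥(F p m)) (subD X d F hsub p) n →ₗ[R] homologyAt X d n :=
  Submodule.mapQ _ _ (inclKer X d F hsub p n)
    (by
      rintro x ⟨y, hy⟩
      exact ⟨(y : X (n + 1)), congrArg Subtype.val hy⟩)

end FiltrationSetup

/-!
If `H_n(F^s) → H_n(X)` is injective, then every boundary of `X` lying in `F^s_n` is a boundary of
`F^s`. For `s ≥ p` this applies to the boundaries lying in `F^p_n`, so the increasing union of the
`J^r` already reaches `Im ∂_{n+1} ∩ F^p_n` at `r = s - p + 1`.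
-/

section InjectiveInclusion

variable {X : ℤ → Type*} [∀ n, AddCommGroup (X n)] [∀ n, Module R (X n)]
  {d : ∀ i j : ℤ, X i →ₗ[R] X j} {F : ℤ → ∀ n : ℤ, Submodule R (X n)}

theorem filtJ_le_range_inf (r p n : ℤ) :
    filtJ X d F r p n ≤ LinearMap.range (d (n + 1) n) ⊓ F p n :=
  inf_le_inf_right _ LinearMap.map_le_range

variable {hsub : ∀ p i j : ℤ, ∀ x : X i, x ∈ F p i → d i j x ∈ F p j} {n : ℤ}

theorem map_eq_range_inf_of_injective_homologyMapIncl {s : ℤ}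
    (hdd : ∀ x : X (n + 1), d n (n - 1) (d (n + 1) n x) = 0)
    (hinj : Function.Injective (homologyMapIncl X d F hsub s n)) :
    Submodule.map (d (n + 1) n) (F s (n + 1)) = LinearMap.range (d (n + 1) n) ⊓ F s n := by
  apply le_antisymm
  · exact le_inf LinearMap.map_le_range (Submodule.map_le_iff_le_comap.2 (hsub s (n + 1) n))
  · rintro _ ⟨⟨y, rfl⟩, hy⟩
    let z : LinearMap.ker (subD X d F hsub s n (n - 1)) :=
      ⟨⟨d (n + 1) n y, hy⟩, Subtype.ext (hdd y)⟩
    have image_class_eq_zero : homologyMapIncl X d F hsub s n (Submodule.Quotient.mk z) = 0 :=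
      (Submodule.Quotient.mk_eq_zero _).2 ⟨y, rfl⟩
    have class_eq_zero : (Submodule.Quotient.mk z : homologyAt _ (subD X d F hsub s) n) = 0 :=
      (map_eq_zero_iff _ hinj).1 image_class_eq_zero
    obtain ⟨w, hw⟩ := (Submodule.Quotient.mk_eq_zero _).1 class_eq_zero
    exact ⟨w, w.2, congrArg Subtype.val hw⟩

theorem filtJ_eq_range_inf_of_injective_homologyMapIncl {r p : ℤ}
    (hdd : ∀ x : X (n + 1), d n (n - 1) (d (n + 1) n x) = 0)
    (hle : F p n ≤ F (p + r - 1) n)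
    (hinj : Function.Injective (homologyMapIncl X d F hsub (p + r - 1) n)) :
    filtJ X d F r p n = LinearMap.range (d (n + 1) n) ⊓ F p n := by
  rw [filtJ, map_eq_range_inf_of_injective_homologyMapIncl hdd hinj, inf_assoc,
    inf_eq_right.2 hle]

theorem iSup_filtJ_sup_eq_general {p s : ℤ}
    (hdd : ∀ x : X (n + 1), d n (n - 1) (d (n + 1) n x) = 0)
    (hmono : ∀ p : ℤ, F (p - 1) n ≤ F p n) (hps : p ≤ s)
    (hinj : Function.Injective (homologyMapIncl X d F hsub s n)) :
    ⨆ r : ℕ, filtJ X d F r p n = LinearMap.range (d (n + 1) n) ⊓ F p n := by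
  have monotone_F : Monotone fun p => F p n :=
    monotone_int_of_le_succ fun p => by simpa only [add_sub_cancel_right] using hmono (p + 1)
  obtain ⟨r, rfl⟩ : ∃ r : ℕ, s = p + r - 1 := ⟨(s - p + 1).toNat, by omega⟩
  apply le_antisymm
  · exact iSup_le fun r => filtJ_le_range_inf r p n
  · rw [← filtJ_eq_range_inf_of_injective_homologyMapIncl hdd (monotone_F hps) hinj]
    exact le_iSup (fun r : ℕ => filtJ X d F r p n) r

end InjectiveInclusion

/-- Let `R` be a ring and `X` a chain complex of left `R`-modules with a
filtration `(F p)ₚ` by subcomplexes, and let `ι^p : F^p → X` denote the inclusions.  Fix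
`p q : ℤ` and set `n = p + q`.  If there exists `r₀ ≥ 1` such that
`H_n(ι^{p+r₀−1}) : H_n(F^{p+r₀−1}) → H_n(X)` is an isomorphism, then
`(⋃_{r≥0} J^r_{p,q}) + F^{p−1}_n = (Im ∂_{n+1} ∩ F^p_n) + F^{p−1}_n` as submodules of `X_n`. -/
theorem iSup_filtJ_sup_eq
    (X : ℤ → Type*) [∀ n, AddCommGroup (X n)] [∀ n, Module R (X n)]
    (d : ∀ i j : ℤ, X i →ₗ[R] X j)
    (hshape : ∀ i j : ℤ, j ≠ i - 1 → d i j = 0)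
    (hdd : ∀ i j k : ℤ, ∀ x : X i, d j k (d i j x) = 0)
    (F : ℤ → ∀ n : ℤ, Submodule R (X n))
    (hmono : ∀ p n : ℤ, F (p - 1) n ≤ F p n)
    (hsub : ∀ p i j : ℤ, ∀ x : X i, x ∈ F p i → d i j x ∈ F p j)
    (p q : ℤ)
    (hiso : ∃ r₀ : ℤ, 1 ≤ r₀ ∧
      Function.Bijective (homologyMapIncl X d F hsub (p + r₀ - 1) (p + q))) :
    (⨆ r : ℕ, filtJ X d F (r : ℤ) p (p + q)) ⊔ F (p - 1) (p + q)
      = (LinearMap.range (d (p + q + 1) (p + q)) ⊓ F p (p + q)) ⊔ F (p - 1) (p + q) := by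
  obtain ⟨r₀, hr₀, hbij⟩ := hiso
  rw [iSup_filtJ_sup_eq_general (hdd _ _ _) (hmono · _) (by omega) hbij.injective]
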